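/- Let Φ be a Young function and φ:(0,∞)→(0,∞) satisfying the doubling condition. Then there exists C>0 such that for any f in the Orlicz–Campanato space 𝓛^{(Φ,φ)}(ℝⁿ) and any two balls B(a,r) ⊂ B(b,s), |f_{B(a,r)} − f_{B(b,s)}| ≤ C (∫_r^{2s} Φ⁻¹(φ(t))/t dt) ‖f‖_{𝓛^{(Φ,φ)}}. -/

import Mathlib

open MeasureTheory Set Metric Filter NNReal ENNReal Topology

noncomputable section

/-- Generalized inverse in the sense of O'Neil. -/
def ginv (Φ : ℝ≥0∞ → ℝ≥0∞) (u : ℝ≥0∞) : ℝ≥0∞ :=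
  if u = ⊤ then ⊤ else sInf {t | u < Φ t}

/-- A Young function: increasing, convex, vanishing at 0, left continuous,
not identically zero nor identically infinite. -/
structure IsYoung (Φ : ℝ≥0∞ → ℝ≥0∞) : Prop where
  mono : Monotone Φ
  zero : Φ 0 = 0
  top : Φ ⊤ = ⊤
  conv : ∀ (x y : ℝ≥0∞) (a b : ℝ≥0), a + b = 1 →
    Φ ((a : ℝ≥0∞) * x + (b : ℝ≥0∞) * y) ≤ (a : ℝ≥0∞) * Φ x + (b : ℝ≥0∞) * Φ y
  lcont : ∀ t : ℝ≥0∞, t < sInf {s | Φ s = ⊤} →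
    Filter.Tendsto Φ (nhdsWithin t (Set.Iio t)) (nhds (Φ t))
  pos : ∃ t, 0 < t ∧ Φ t ≠ ⊤
  fin : ∃ t, t ≠ ⊤ ∧ Φ t ≠ 0

/-- `θ` is almost decreasing on `(0,∞)`. -/
def AlmostDecreasingOn (θ : ℝ → ℝ) : Prop :=
  ∃ C : ℝ, 0 < C ∧ ∀ r s : ℝ, 0 < r → r < s → θ s ≤ C * θ r

/-- `θ` is almost increasing on `(0,∞)`. -/
def AlmostIncreasingOn (θ : ℝ → ℝ) : Prop :=
  ∃ C : ℝ, 0 < C ∧ ∀ r s : ℝ, 0 < r → r < s → θ r ≤ C * θ s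

/-- The class `𝒢^dec`: positive, almost decreasing `φ` with `r ↦ φ(r) rⁿ` almost increasing. -/
def Gdec (n : ℕ) (φ : ℝ → ℝ) : Prop :=
  (∀ r : ℝ, 0 < r → 0 < φ r) ∧ AlmostDecreasingOn φ ∧
    AlmostIncreasingOn (fun r => φ r * r ^ n)

variable {n : ℕ}

/-- The Orlicz–Morrey "norm" of `f` on the ball `B(a,r)`. -/
def ballNorm (Φ : ℝ≥0∞ → ℝ≥0∞) (φ : ℝ → ℝ)
    (f : EuclideanSpace ℝ (Fin n) → ℝ) (a : EuclideanSpace ℝ (Fin n)) (r : ℝ) : ℝ≥0∞ :=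
  sInf {lam : ℝ≥0∞ | 0 < lam ∧
    (ENNReal.ofReal (φ r))⁻¹ * ((volume (ball a r))⁻¹ *
      ∫⁻ x in ball a r, Φ (ENNReal.ofReal |f x| / lam)) ≤ 1}

/-- The Orlicz–Morrey norm `‖f‖_{L^{(Φ,φ)}}`: supremum over all balls of `ballNorm`. -/
def omNorm (Φ : ℝ≥0∞ → ℝ≥0∞) (φ : ℝ → ℝ) (f : EuclideanSpace ℝ (Fin n) → ℝ) : ℝ≥0∞ :=
  ⨆ (a : EuclideanSpace ℝ (Fin n)) (r : ℝ) (_ : 0 < r), ballNorm Φ φ f a r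

/-- The Orlicz–Campanato norm `‖f‖_{𝓛^{(Φ,φ)}} = sup_B ‖f − f_B‖_{Φ,φ,B}`. -/
def campNorm (Φ : ℝ≥0∞ → ℝ≥0∞) (φ : ℝ → ℝ) (f : EuclideanSpace ℝ (Fin n) → ℝ) : ℝ≥0∞ :=
  ⨆ (a : EuclideanSpace ℝ (Fin n)) (r : ℝ) (_ : 0 < r),
    ballNorm Φ φ (fun x => f x - ⨍ y in ball a r, f y) a r

/-- `φ` satisfies the doubling condition on `(0,∞)`. -/
def DoublingOn (φ : ℝ → ℝ) : Prop :=
  ∃ C : ℝ, 0 < C ∧ ∀ r s : ℝ, 0 < r → 0 < s → 1/2 ≤ r / s → r / s ≤ 2 →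
    φ r / φ s ≤ C ∧ (1/C : ℝ) ≤ φ r / φ s

lemma young_smul {Φ : ℝ≥0∞ → ℝ≥0∞} (hY : IsYoung Φ) (c : ℝ≥0) (hc : 1 ≤ c) (x : ℝ≥0∞) :
    (c : ℝ≥0∞) * Φ x ≤ Φ (c * x) := by
  have hc0 : c ≠ 0 := (lt_of_lt_of_le one_pos hc).ne'
  have hc0' : (c : ℝ≥0∞) ≠ 0 := by exact_mod_cast hc0
  have h := hY.conv (c * x) 0 c⁻¹ (1 - c⁻¹) (add_tsub_cancel_of_le (inv_le_one_of_one_le₀ hc))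
  rw [hY.zero, mul_zero, add_zero, add_zero, ENNReal.coe_inv hc0, ← mul_assoc,
    ENNReal.inv_mul_cancel hc0' ENNReal.coe_ne_top, one_mul] at h
  calc (c : ℝ≥0∞) * Φ x ≤ c * ((c : ℝ≥0∞)⁻¹ * Φ (c * x)) := by gcongr
    _ = Φ (c * x) := by
      rw [← mul_assoc, ENNReal.mul_inv_cancel hc0' ENNReal.coe_ne_top, one_mul]

lemma ginv_ne_top {Φ : ℝ≥0∞ → ℝ≥0∞} (hY : IsYoung Φ) (u : ℝ≥0∞) (hu : u ≠ ⊤) :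
    ginv Φ u ≠ ⊤ := by
  obtain ⟨t, ht, ht0⟩ := hY.fin
  obtain ⟨k, hk⟩ := ENNReal.exists_nat_mul_gt ht0 hu
  unfold ginv
  rw [if_neg hu]
  have h1 : u < Φ (((k + 1 : ℝ≥0) : ℝ≥0∞) * t) := by
    refine lt_of_lt_of_le hk (le_trans ?_ (young_smul hY (k + 1) (by simp) t))
    gcongr
    push_cast
    exact le_self_add
  exact ne_top_of_le_ne_top (ENNReal.mul_ne_top ENNReal.coe_ne_top ht) (sInf_le h1)

lemma ginv_mul_le {Φ : ℝ≥0∞ → ℝ≥0∞} (hY : IsYoung Φ) (c : ℝ≥0) (hc : 1 ≤ c) (u v : ℝ≥0∞)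
    (hu : u ≠ ⊤) (hv : v ≠ ⊤) (h : v ≤ c * u) : ginv Φ v ≤ c * ginv Φ u := by
  have hc0 : c ≠ 0 := (lt_of_lt_of_le one_pos hc).ne'
  have hc0' : (c : ℝ≥0∞) ≠ 0 := by exact_mod_cast hc0
  unfold ginv
  rw [if_neg hu, if_neg hv, mul_comm, ← ENNReal.div_le_iff hc0' ENNReal.coe_ne_top]
  refine le_sInf fun t ht => ?_
  rw [ENNReal.div_le_iff hc0' ENNReal.coe_ne_top, mul_comm]
  refine sInf_le ?_
  refine lt_of_le_of_lt h (lt_of_lt_of_le ?_ (young_smul hY c hc t))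
  exact ENNReal.mul_lt_mul_right hc0' ENNReal.coe_ne_top ht

lemma young_lin {Φ : ℝ≥0∞ → ℝ≥0∞} (hY : IsYoung Φ) (u T : ℝ≥0∞) (hu0 : u ≠ 0)
    (hu : u ≠ ⊤) (hT0 : T ≠ 0) (hT : T ≠ ⊤) (h : u < Φ T) (t : ℝ≥0∞) :
    t ≤ T + (T / u) * Φ t := by
  rcases le_total t T with h1 | h1
  · exact h1.trans le_self_add
  refine le_trans ?_ le_add_self
  rcases eq_or_ne t ⊤ with rfl | ht
  · rw [hY.top, ENNReal.mul_top]
    exact (ENNReal.div_pos hT0 hu).ne'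
  lift t to ℝ≥0 using ht
  lift T to ℝ≥0 using hT
  have hT0' : T ≠ 0 := by exact_mod_cast hT0
  have h1' : T ≤ t := by exact_mod_cast h1
  have h2 := young_smul hY (t / T) ((one_le_div (pos_iff_ne_zero.2 hT0')).2 h1') T
  rw [← ENNReal.coe_mul, div_mul_cancel₀ _ hT0'] at h2
  have h3 : ((t / T : ℝ≥0) : ℝ≥0∞) * u ≤ Φ t := le_trans (by gcongr) h2
  calc (t : ℝ≥0∞) = (T / u) * (((t / T : ℝ≥0) : ℝ≥0∞) * u) := by
        rw [mul_comm (((t / T : ℝ≥0) : ℝ≥0∞)) u, ← mul_assoc, ENNReal.div_mul_cancel hu0 hu,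
          ← ENNReal.coe_mul, mul_div_cancel₀ _ hT0']
    _ ≤ _ := by gcongr

lemma lint_bound {Φ : ℝ≥0∞ → ℝ≥0∞} (hY : IsYoung Φ) (φ : ℝ → ℝ) (hφ : ∀ r, 0 < r → 0 < φ r)
    {n : ℕ} (g : EuclideanSpace ℝ (Fin n) → ℝ) (a : EuclideanSpace ℝ (Fin n)) (r : ℝ)
    (hr : 0 < r) (N : ℝ≥0∞) (hN : N ≠ ⊤) (h : ballNorm Φ φ g a r ≤ N) :
    (volume (ball a r))⁻¹ * ∫⁻ x in ball a r, ENNReal.ofReal |g x| ≤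
      (2 * ginv Φ (ENNReal.ofReal (φ r))) * N := by
  set u := ENNReal.ofReal (φ r) with hu
  have hu0 : u ≠ 0 := by rw [hu]; simpa using hφ r hr
  have hut : u ≠ ⊤ := ENNReal.ofReal_ne_top
  have hV0 : volume (ball a r) ≠ 0 := (measure_ball_pos volume a hr).ne'
  have hVt : volume (ball a r) ≠ ⊤ := measure_ball_lt_top.ne
  set V := volume (ball a r) with hV
  have hg := ginv_ne_top hY u hut
  have key : ∀ a' > ginv Φ u, ∀ b' > N,
      2⁻¹ * (V⁻¹ * ∫⁻ x in ball a r, ENNReal.ofReal |g x|) ≤ a' * b' := by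
    intro a' ha' b' hb'
    have h1 : sInf {t | u < Φ t} < a' := by
      have : ginv Φ u = sInf {t | u < Φ t} := by unfold ginv; rw [if_neg hut]
      rw [← this]; exact ha'
    obtain ⟨T, hT, hTa⟩ := sInf_lt_iff.1 h1
    have hT0 : T ≠ 0 := by
      rintro rfl
      have : u < Φ 0 := hT
      rw [hY.zero] at this
      exact not_lt_bot this
    have hTt : T ≠ ⊤ := ne_top_of_lt hTa
    obtain ⟨lam, ⟨hl0, hl⟩, hlb⟩ := sInf_lt_iff.1 (lt_of_le_of_lt h hb')
    have hlt : lam ≠ ⊤ := ne_top_of_lt hlb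
    have hTu : T / u ≠ ⊤ := ENNReal.div_ne_top hTt hu0
    set J := ∫⁻ x in ball a r, Φ (ENNReal.ofReal |g x| / lam) with hJ
    have e1 : ∫⁻ x in ball a r, ENNReal.ofReal |g x| ≤ lam * (T * V + T / u * J) := by
      calc ∫⁻ x in ball a r, ENNReal.ofReal |g x|
          ≤ ∫⁻ x in ball a r, lam * (T + T / u * Φ (ENNReal.ofReal |g x| / lam)) := by
            refine lintegral_mono fun x => ?_
            calc ENNReal.ofReal |g x| = lam * (ENNReal.ofReal |g x| / lam) :=
                  (ENNReal.mul_div_cancel hl0.ne' hlt).symm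
              _ ≤ _ := by
                gcongr
                exact young_lin hY u T hu0 hut hT0 hTt hT _
        _ = lam * (T * V + T / u * J) := by
            rw [lintegral_const_mul' _ _ hlt, lintegral_add_left measurable_const,
              lintegral_const_mul' _ _ hTu, lintegral_const, Measure.restrict_apply_univ]
    calc 2⁻¹ * (V⁻¹ * ∫⁻ x in ball a r, ENNReal.ofReal |g x|)
        ≤ 2⁻¹ * (V⁻¹ * (lam * (T * V + T / u * J))) := by gcongr
      _ = 2⁻¹ * (lam * (T * (V⁻¹ * V) + T * (u⁻¹ * (V⁻¹ * J)))) := by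
          rw [ENNReal.div_eq_inv_mul]; ring
      _ ≤ 2⁻¹ * (lam * (T * 1 + T * 1)) := by
          rw [ENNReal.inv_mul_cancel hV0 hVt]; gcongr
      _ = (2⁻¹ * 2) * (T * lam) := by ring
      _ = T * lam := by
          rw [ENNReal.inv_mul_cancel two_ne_zero ENNReal.ofNat_ne_top, one_mul]
      _ ≤ a' * b' := by gcongr
  have := ENNReal.le_mul_of_forall_lt (Or.inr hN) (Or.inl hg) key
  calc V⁻¹ * ∫⁻ x in ball a r, ENNReal.ofReal |g x|
      = 2 * (2⁻¹ * (V⁻¹ * ∫⁻ x in ball a r, ENNReal.ofReal |g x|)) := by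
        rw [← mul_assoc, ENNReal.mul_inv_cancel two_ne_zero ENNReal.ofNat_ne_top, one_mul]
    _ ≤ 2 * (ginv Φ u * N) := by gcongr
    _ = _ := by ring

lemma avg_sub_le {n : ℕ} (f : EuclideanSpace ℝ (Fin n) → ℝ) (hf : LocallyIntegrable f volume)
    (a : EuclideanSpace ℝ (Fin n)) (r : ℝ) (hr : 0 < r) (c : ℝ) :
    ENNReal.ofReal |(⨍ y in ball a r, f y) - c| ≤
      (volume (ball a r))⁻¹ * ∫⁻ x in ball a r, ENNReal.ofReal |f x - c| := by
  have hV0 : volume (ball a r) ≠ 0 := (measure_ball_pos volume a hr).ne'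
  have hVt : volume (ball a r) ≠ ⊤ := measure_ball_lt_top.ne
  have hi : IntegrableOn f (ball a r) volume :=
    (hf.integrableOn_isCompact (isCompact_closedBall a r)).mono_set ball_subset_closedBall
  have hc : IntegrableOn (fun _ : EuclideanSpace ℝ (Fin n) => c) (ball a r) volume :=
    integrableOn_const hVt
  have e : (⨍ y in ball a r, f y) - c = ⨍ y in ball a r, (f y - c) := by
    rw [setAverage_eq, setAverage_eq, integral_sub hi hc, setIntegral_const, smul_sub, smul_smul,
      inv_mul_cancel₀ (by rw [measureReal_def]; exact (ENNReal.toReal_pos hV0 hVt).ne'), one_smul]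
  rw [e, ← Real.enorm_eq_ofReal_abs]
  unfold average
  refine (enorm_integral_le_lintegral_enorm _).trans ?_
  rw [lintegral_smul_measure, Measure.restrict_apply_univ, smul_eq_mul]
  simp_rw [Real.enorm_eq_ofReal_abs]
  exact le_rfl

lemma vol_ratio {n : ℕ} (a b : EuclideanSpace ℝ (Fin n)) (r s : ℝ) (hr : 0 < r) (hs : 0 < s)
    (h : s ≤ 4 * r) : (volume (ball a r))⁻¹ ≤ 4 ^ n * (volume (ball b s))⁻¹ := by
  have hV0 : volume (ball b s) ≠ 0 := (measure_ball_pos volume b hs).ne'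
  have hVt : volume (ball b s) ≠ ⊤ := measure_ball_lt_top.ne
  have h4 : ((4 : ℝ≥0∞) ^ n) ≠ 0 := pow_ne_zero _ (by norm_num)
  have h4t : ((4 : ℝ≥0∞) ^ n) ≠ ⊤ := ENNReal.pow_ne_top ENNReal.ofNat_ne_top
  have h1 : volume (ball b s) ≤ 4 ^ n * volume (ball a r) := by
    rw [Measure.addHaar_ball_of_pos _ _ hs, Measure.addHaar_ball_of_pos _ _ hr,
      finrank_euclideanSpace_fin, ← mul_assoc]
    gcongr
    have : (4 : ℝ≥0∞) ^ n = ENNReal.ofReal (4 ^ n) := by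
      rw [ENNReal.ofReal_pow (by norm_num)]; norm_num
    rw [this, ← ENNReal.ofReal_mul (by positivity), ← mul_pow]
    gcongr
  have h2 := ENNReal.inv_le_inv.2 h1
  rw [ENNReal.mul_inv (Or.inl h4) (Or.inl h4t)] at h2
  calc (volume (ball a r))⁻¹ = 4 ^ n * ((4 ^ n)⁻¹ * (volume (ball a r))⁻¹) := by
        rw [← mul_assoc, ENNReal.mul_inv_cancel h4 h4t, one_mul]
    _ ≤ _ := by gcongr

lemma int_bound {Φ : ℝ≥0∞ → ℝ≥0∞} (hY : IsYoung Φ) (φ : ℝ → ℝ) (hφ : ∀ r, 0 < r → 0 < φ r)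
    (C : ℝ≥0) (hC : 1 ≤ C)
    (hd : ∀ R t : ℝ, 0 < R → R < t → t ≤ 2 * R → φ (2 * R) ≤ C * φ t) (R : ℝ) (hR : 0 < R) :
    ginv Φ (ENNReal.ofReal (φ (2 * R))) ≤ (2 * C) *
      ∫⁻ t in Set.Ioc R (2 * R), ginv Φ (ENNReal.ofReal (φ t)) / ENNReal.ofReal t := by
  set w := ginv Φ (ENNReal.ofReal (φ (2 * R)))
  have hC0 : (C : ℝ≥0∞) ≠ 0 := by exact_mod_cast (lt_of_lt_of_le one_pos hC).ne'
  have hR0 : ENNReal.ofReal R ≠ 0 := by simpa using hR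
  have h1 : ∀ t ∈ Set.Ioc R (2 * R), (C : ℝ≥0∞)⁻¹ * w * (2 * ENNReal.ofReal R)⁻¹ ≤
      ginv Φ (ENNReal.ofReal (φ t)) / ENNReal.ofReal t := by
    intro t ht
    have := ginv_mul_le hY C hC (ENNReal.ofReal (φ t)) (ENNReal.ofReal (φ (2 * R)))
      ENNReal.ofReal_ne_top ENNReal.ofReal_ne_top (by
        rw [← ENNReal.ofReal_coe_nnreal, ← ENNReal.ofReal_mul (by positivity)]
        exact ENNReal.ofReal_le_ofReal (hd R t hR ht.1 ht.2))
    rw [ENNReal.div_eq_inv_mul, mul_comm]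
    refine mul_le_mul' ?_ ?_
    · apply ENNReal.inv_le_inv.2
      have : (2 : ℝ≥0∞) = ENNReal.ofReal 2 := by norm_num
      rw [this, ← ENNReal.ofReal_mul (by norm_num)]
      exact ENNReal.ofReal_le_ofReal ht.2
    · calc (C : ℝ≥0∞)⁻¹ * w ≤ (C : ℝ≥0∞)⁻¹ * (C * ginv Φ (ENNReal.ofReal (φ t))) := by gcongr
        _ = _ := by rw [← mul_assoc, ENNReal.inv_mul_cancel hC0 ENNReal.coe_ne_top, one_mul]
  have h2 := setLIntegral_mono' (μ := volume) measurableSet_Ioc h1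
  rw [setLIntegral_const, Real.volume_Ioc, show 2 * R - R = R by ring,
    ENNReal.mul_inv (Or.inl two_ne_zero) (Or.inl ENNReal.ofNat_ne_top)] at h2
  calc w = (2 * 2⁻¹) * (C * (C : ℝ≥0∞)⁻¹) * ((ENNReal.ofReal R)⁻¹ * ENNReal.ofReal R) * w := by
        rw [ENNReal.mul_inv_cancel two_ne_zero ENNReal.ofNat_ne_top,
          ENNReal.mul_inv_cancel hC0 ENNReal.coe_ne_top,
          ENNReal.inv_mul_cancel hR0 ENNReal.ofReal_ne_top]; simp
    _ = (2 * C) * ((C : ℝ≥0∞)⁻¹ * w * (2⁻¹ * (ENNReal.ofReal R)⁻¹) * ENNReal.ofReal R) := by ring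
    _ ≤ _ := by gcongr

lemma ofReal_abs_tri (x y z : ℝ) : ENNReal.ofReal |x - z| ≤
    ENNReal.ofReal |x - y| + ENNReal.ofReal |y - z| := by
  rw [← ENNReal.ofReal_add (abs_nonneg _) (abs_nonneg _)]
  exact ENNReal.ofReal_le_ofReal (abs_sub_le x y z)

lemma step_bound {n : ℕ} {Φ : ℝ≥0∞ → ℝ≥0∞} (hY : IsYoung Φ) (φ : ℝ → ℝ)
    (hφ : ∀ r, 0 < r → 0 < φ r) (C : ℝ≥0) (hC : 1 ≤ C)
    (hd : ∀ R t : ℝ, 0 < R → R < t → t ≤ 2 * R → φ (2 * R) ≤ C * φ t)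
    (f : EuclideanSpace ℝ (Fin n) → ℝ) (hf : LocallyIntegrable f volume)
    (hN : campNorm Φ φ f < ⊤) (a b : EuclideanSpace ℝ (Fin n)) (r R : ℝ) (hr : 0 < r)
    (hR : 0 < R) (hrR : 2 * R ≤ 4 * r) (hsub : ball a r ⊆ ball b (2 * R)) :
    ENNReal.ofReal |(⨍ y in ball a r, f y) - ⨍ y in ball b (2 * R), f y| ≤
      (4 ^ n * (2 * (2 * C))) *
        (∫⁻ t in Set.Ioc R (2 * R), ginv Φ (ENNReal.ofReal (φ t)) / ENNReal.ofReal t) *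
        campNorm Φ φ f := by
  have h2R : 0 < 2 * R := by positivity
  have hb : ballNorm Φ φ (fun x => f x - ⨍ y in ball b (2 * R), f y) b (2 * R) ≤
      campNorm Φ φ f :=
    le_iSup_of_le b (le_iSup_of_le (2 * R) (le_iSup_of_le h2R le_rfl))
  have h1 := lint_bound hY φ hφ _ b (2 * R) h2R _ hN.ne hb
  refine (avg_sub_le f hf a r hr _).trans ?_
  set c := ⨍ y in ball b (2 * R), f y
  calc (volume (ball a r))⁻¹ * ∫⁻ x in ball a r, ENNReal.ofReal |f x - c|
      ≤ (4 ^ n * (volume (ball b (2 * R)))⁻¹) *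
          ∫⁻ x in ball b (2 * R), ENNReal.ofReal |f x - c| :=
        mul_le_mul' (vol_ratio a b r (2 * R) hr h2R hrR) (lintegral_mono_set hsub)
    _ ≤ 4 ^ n * ((2 * ginv Φ (ENNReal.ofReal (φ (2 * R)))) * campNorm Φ φ f) := by
        rw [mul_assoc]; gcongr
    _ ≤ 4 ^ n * ((2 * ((2 * C) * ∫⁻ t in Set.Ioc R (2 * R),
          ginv Φ (ENNReal.ofReal (φ t)) / ENNReal.ofReal t)) * campNorm Φ φ f) := by
        gcongr
        exact int_bound hY φ hφ C hC hd R hR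
    _ = _ := by ring

lemma Ioc_split (F : ℝ → ℝ≥0∞) (x y z : ℝ) (hxy : x ≤ y) (hyz : y ≤ z) :
    ∫⁻ t in Set.Ioc x z, F t = (∫⁻ t in Set.Ioc x y, F t) + ∫⁻ t in Set.Ioc y z, F t := by
  rw [← Set.Ioc_union_Ioc_eq_Ioc hxy hyz, lintegral_union measurableSet_Ioc]
  exact Set.Ioc_disjoint_Ioc_of_le le_rfl

/-- for a doubling `φ`, there is `C > 0` such that for every
`f ∈ 𝓛^{(Φ,φ)}` and nested balls `B(a,r) ⊆ B(b,s)`,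
`|f_{B(a,r)} − f_{B(b,s)}| ≤ C (∫_r^{2s} Φ⁻¹(φ(t))/t dt) ‖f‖_{𝓛^{(Φ,φ)}}`. -/
theorem stmt11 {n : ℕ} (Φ : ℝ≥0∞ → ℝ≥0∞) (hY : IsYoung Φ) (φ : ℝ → ℝ)
    (hφpos : ∀ r : ℝ, 0 < r → 0 < φ r) (hφdb : DoublingOn φ) :
    ∃ C : ℝ≥0∞, 0 < C ∧ C ≠ ⊤ ∧
    ∀ (f : EuclideanSpace ℝ (Fin n) → ℝ), LocallyIntegrable f volume →
      campNorm Φ φ f < ⊤ →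
    ∀ (a b : EuclideanSpace ℝ (Fin n)) (r s : ℝ), 0 < r → 0 < s →
      ball a r ⊆ ball b s →
      ENNReal.ofReal |(⨍ y in ball a r, f y) - ⨍ y in ball b s, f y| ≤
        C * (∫⁻ t in Set.Ioc r (2 * s), ginv Φ (ENNReal.ofReal (φ t)) / ENNReal.ofReal t) *
          campNorm Φ φ f := by
  obtain ⟨C0, hC0, hd0⟩ := hφdb
  set C : ℝ≥0 := max 1 C0.toNNReal with hCdef
  have hC : 1 ≤ C := le_max_left _ _
  have hCC : C0 ≤ C := by
    rw [hCdef, NNReal.coe_max]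
    exact (Real.le_coe_toNNReal C0).trans (le_max_right _ _)
  have hd : ∀ R t : ℝ, 0 < R → R < t → t ≤ 2 * R → φ (2 * R) ≤ C * φ t := by
    intro R t hR h1 h2
    have ht : 0 < t := hR.trans h1
    have := (hd0 (2 * R) t (by positivity) ht (by rw [le_div_iff₀ ht]; linarith)
      (by rw [div_le_iff₀ ht]; linarith)).1
    rw [div_le_iff₀ (hφpos t ht)] at this
    exact this.trans (mul_le_mul_of_nonneg_right hCC (hφpos t ht).le)
  set K : ℝ≥0∞ := 4 ^ n * (2 * (2 * C)) with hK
  have hKt : K ≠ ⊤ := ENNReal.mul_ne_top (ENNReal.pow_ne_top ENNReal.ofNat_ne_top)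
    (ENNReal.mul_ne_top ENNReal.ofNat_ne_top
      (ENNReal.mul_ne_top ENNReal.ofNat_ne_top ENNReal.coe_ne_top))
  have hC0' : (C : ℝ≥0∞) ≠ 0 := by exact_mod_cast (lt_of_lt_of_le one_pos hC).ne'
  have hK0 : K ≠ 0 := mul_ne_zero (pow_ne_zero _ (by norm_num))
    (mul_ne_zero two_ne_zero (mul_ne_zero two_ne_zero hC0'))
  refine ⟨2 * K, pos_iff_ne_zero.2 (mul_ne_zero two_ne_zero hK0),
    ENNReal.mul_ne_top ENNReal.ofNat_ne_top hKt, ?_⟩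
  intro f hf hN a b r s hr hs hsub
  set F : ℝ → ℝ≥0∞ := fun t => ginv Φ (ENNReal.ofReal (φ t)) / ENNReal.ofReal t with hF
  set N := campNorm Φ φ f with hNdef
  rcases lt_or_ge s r with hsr | hrs
  · -- only possible in dimension zero
    have hn : n = 0 := by
      by_contra hn
      have h1 := measure_mono (μ := volume) hsub
      rw [Measure.addHaar_ball_of_pos _ _ hs, Measure.addHaar_ball_of_pos _ _ hr,
        finrank_euclideanSpace_fin] at h1
      rw [ENNReal.mul_le_mul_iff_left (measure_ball_pos volume _ one_pos).ne'
        measure_ball_lt_top.ne, ENNReal.ofReal_le_ofReal_iff (by positivity)] at h1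
      exact absurd (pow_lt_pow_left₀ hsr hs.le hn) (not_lt.2 h1)
    subst hn
    have e1 : ball a r = Set.univ := by
      ext x; simp [Subsingleton.elim x a, hr]
    have e2 : ball b s = Set.univ := by
      ext x; simp [Subsingleton.elim x b, hs]
    rw [e1, e2]
    simp
  have step := fun a b r R => step_bound (n := n) hY φ hφpos C hC hd f hf hN a b r R
  have chain : ∀ m : ℕ, ENNReal.ofReal |(⨍ y in ball a r, f y) - ⨍ y in ball a (2 ^ m * r), f y| ≤
      K * (∫⁻ t in Set.Ioc r (2 ^ m * r), F t) * N := by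
    intro m
    induction m with
    | zero => simp
    | succ m ih =>
      have hp : 0 < 2 ^ m * r := by positivity
      have h1 : r ≤ 2 ^ m * r := le_mul_of_one_le_left hr.le (one_le_pow₀ (by norm_num))
      have e : (2 : ℝ) ^ (m + 1) * r = 2 * (2 ^ m * r) := by ring
      rw [e, Ioc_split F r (2 ^ m * r) _ h1 (by linarith)]
      have h2 := step a a (2 ^ m * r) (2 ^ m * r) hp hp (by linarith)
        (ball_subset_ball (by linarith))
      refine (ofReal_abs_tri _ (⨍ y in ball a (2 ^ m * r), f y) _).trans ?_
      rw [mul_add, add_mul]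
      exact add_le_add ih h2
  obtain ⟨m, hm1, hm2⟩ := exists_nat_pow_near ((one_le_div hr).2 hrs) (one_lt_two (α := ℝ))
  rw [le_div_iff₀ hr] at hm1
  rw [div_lt_iff₀ hr, pow_succ] at hm2
  have hp : 0 < 2 ^ m * r := by positivity
  have h1 : r ≤ 2 ^ m * r := le_mul_of_one_le_left hr.le (one_le_pow₀ (by norm_num))
  have hab : dist a b < s := hsub (mem_ball_self hr)
  have s1 := step a b (2 ^ m * r) s hp hs (by linarith) (ball_subset_ball' (by linarith))
  have s2 := step b b s s hs hs (by linarith) (ball_subset_ball (by linarith))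
  have s0 := chain m
  rw [abs_sub_comm] at s2
  set I1 := ∫⁻ t in Set.Ioc r (2 ^ m * r), F t with hI1
  set I2 := ∫⁻ t in Set.Ioc s (2 * s), F t with hI2
  have hI : I1 + I2 ≤ ∫⁻ t in Set.Ioc r (2 * s), F t := by
    rw [Ioc_split F r s (2 * s) hrs (by linarith)]
    exact add_le_add (lintegral_mono_set (Set.Ioc_subset_Ioc_right hm1)) le_rfl
  calc _ ≤ K * I1 * N + (K * I2 * N + K * I2 * N) :=
        (ofReal_abs_tri _ (⨍ y in ball a (2 ^ m * r), f y) _).trans (add_le_add s0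
          ((ofReal_abs_tri _ (⨍ y in ball b (2 * s), f y) _).trans (add_le_add s1 s2)))
    _ ≤ (K * I1 * N + K * I1 * N) + (K * I2 * N + K * I2 * N) :=
        add_le_add le_self_add le_rfl
    _ = 2 * K * (I1 + I2) * N := by ring
    _ ≤ _ := by gcongr
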